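/- Let n ≥ 1, let X be a topological space with a countable basis consisting of clopen sets, and let C ⊆ X belong to Σ⁰_n(X). Then there is a continuous function Γ : X → ℕ^(ℕ^n) such that Γ(x) is full_n for every x ∈ C and Γ(x) is initial_n for every x ∉ C. -/

import Mathlib

/-!  Common definitions.

`Tower n` is the space ℕ^(ℕ^(n+1)) of the paper: `Tower 0 = ℕ → ℕ`,
`Tower (n+1) = ℕ → Tower n`, each with the product topology (ℕ discrete).
-/

def Tower : ℕ → Type
  | 0 => ℕ → ℕ
  | n + 1 => ℕ → Tower n

instance Tower.topologicalSpace : (n : ℕ) → TopologicalSpace (Tower n)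
  | 0 => inferInstanceAs (TopologicalSpace (ℕ → ℕ))
  | n + 1 => letI := Tower.topologicalSpace n
             inferInstanceAs (TopologicalSpace (ℕ → Tower n))

/-- The Friedman–Stanley jump `E⁺` of an equivalence relation `E` on `X`. -/
def FSJump {X : Type*} (E : X → X → Prop) (p q : ℕ → X) : Prop :=
  (∀ k, ∃ l, E (p k) (q l)) ∧ ∀ l, ∃ k, E (q l) (p k)

/-- The power `E^ω` of an equivalence relation `E` on `X`. -/
def RelPow {X : Type*} (E : X → X → Prop) (p q : ℕ → X) : Prop :=
  ∀ k, E (p k) (q k)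

/-- `eqNatPlus n` is the relation `=_ℕ^{(n+1)+}` on `Tower n = ℕ^(ℕ^(n+1))`. -/
def eqNatPlus : (n : ℕ) → Tower n → Tower n → Prop
  | 0 => FSJump (· = · : ℕ → ℕ → Prop)
  | n + 1 => FSJump (eqNatPlus n)

/-- `eqBairePlus n` is the relation `=_{ℕ^ℕ}^{(n+1)+}` on `Tower (n+1) = ℕ^(ℕ^(n+2))`. -/
def eqBairePlus : (n : ℕ) → Tower (n + 1) → Tower (n + 1) → Prop
  | 0 => FSJump (· = · : (ℕ → ℕ) → (ℕ → ℕ) → Prop)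
  | n + 1 => FSJump (eqBairePlus n)

/-- `FullRel m` on `Tower m = ℕ^(ℕ^(m+1))`: for `m = 2n` it is `(=_ℕ^+)^{n(ω+)}`,
for `m = 2n+1` it is `(=_{ℕ^ℕ}^+)^{n(ω+)}` (with `E^{0(ω+)} = E`,
`E^{(n+1)(ω+)} = ((E^{n(ω+)})^ω)^+`). -/
def FullRel : (m : ℕ) → Tower m → Tower m → Prop
  | 0 => FSJump (· = · : ℕ → ℕ → Prop)
  | 1 => FSJump (· = · : (ℕ → ℕ) → (ℕ → ℕ) → Prop)
  | m + 2 => FSJump (RelPow (FullRel m))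

/-- The pair of canonical elements `(F_{m+1}, I_{m+1})` of `Tower m = ℕ^(ℕ^(m+1))`. -/
def can : (m : ℕ) → Tower m × Tower m
  | 0 => (fun k => if k = 0 then 0 else 1, fun _ => 1)
  | 1 => (fun i k => if i = 0 then 0 else if k + 1 < i then 0 else 1,
          fun i k => if k < i then 0 else 1)
  | m + 2 =>
      (fun i k => if i = 0 then (can m).1 else if k + 1 < i then (can m).1 else (can m).2,
       fun i k => if k < i then (can m).1 else (can m).2)

/-- The canonical element `F_{m+1} ∈ ℕ^(ℕ^(m+1))`. -/
def canF (m : ℕ) : Tower m := (can m).1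

/-- The canonical element `I_{m+1} ∈ ℕ^(ℕ^(m+1))`. -/
def canI (m : ℕ) : Tower m := (can m).2

/-- `p ∈ Tower m = ℕ^(ℕ^(m+1))` is `full_{m+1}`. -/
def IsFull (m : ℕ) (p : Tower m) : Prop := FullRel m p (canF m)

/-- `p ∈ Tower m = ℕ^(ℕ^(m+1))` is `initial_{m+1}`. -/
def IsInitial (m : ℕ) (p : Tower m) : Prop := FullRel m p (canI m)

open Classical in
/-- The permission operator `∧₀`. -/
noncomputable def perm0 (p q : ℕ → ℕ) : ℕ → ℕ :=
  fun k => if ∀ j ≤ k, p j = q j then p k else 1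

/-- The permission operator `∧_{m+1}` on `Tower m = ℕ^(ℕ^(m+1))`
(with `⟨·,·⟩ = Nat.pair`). -/
noncomputable def perm : (m : ℕ) → Tower m → Tower m → Tower m
  | 0, p, q => fun x => max (p (Nat.unpair x).1) (q (Nat.unpair x).2)
  | 1, p, q => fun x => perm0 (p (Nat.unpair x).1) (q (Nat.unpair x).2)
  | m + 2, p, q => fun x k => perm m (p (Nat.unpair x).1 k) (q (Nat.unpair x).2 k)

/-- The operator `⊗_{m+1,i}` on `Tower m = ℕ^(ℕ^(m+1))` (with `⟨·,·⟩ = Nat.pair`). -/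
def otimes : (m : ℕ) → ℕ → Tower m → Tower m
  | 0, i, p => fun k => Nat.pair (p k) i
  | m + 1, i, p => fun k => otimes m i (p k)

/-- `E` continuously reduces to `F`. -/
def ContReduces {X Y : Type*} [TopologicalSpace X] [TopologicalSpace Y]
    (E : X → X → Prop) (F : Y → Y → Prop) : Prop :=
  ∃ f : X → Y, Continuous f ∧ ∀ x x', E x x' ↔ F (f x) (f x')

/-- `SigmaLevel X n` is the pointclass `Σ⁰_{n+1}(X)`: `Σ⁰_1` = open sets,
`Σ⁰_{n+1}` = countable unions of complements of `Σ⁰_n` sets. -/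
def SigmaLevel (X : Type*) [TopologicalSpace X] : ℕ → Set (Set X)
  | 0 => {C | IsOpen C}
  | n + 1 => {C | ∃ A : ℕ → Set X, (∀ i, A i ∈ SigmaLevel X n) ∧ C = ⋃ i, (A i)ᶜ}

/-- The space of `(ι, ar)`-structures with domain ℕ. -/
def Md (ι : Type) (ar : ι → ℕ) : Type := ∀ i : ι, (Fin (ar i) → ℕ) → Bool

instance (ι : Type) (ar : ι → ℕ) : TopologicalSpace (Md ι ar) :=
  inferInstanceAs (TopologicalSpace (∀ i : ι, (Fin (ar i) → ℕ) → Bool))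

/-- Isomorphism of structures with domain ℕ. -/
def Iso {ι : Type} {ar : ι → ℕ} (A B : Md ι ar) : Prop :=
  ∃ σ : ℕ → ℕ, Function.Bijective σ ∧ ∀ i v, A i v = B i (σ ∘ v)

/-- The learning domain of a family: the closure of `K` under isomorphism. -/
def LearnDom {ι : Type} {ar : ι → ℕ} (K : Set (Md ι ar)) : Set (Md ι ar) :=
  {S | ∃ A ∈ K, Iso S A}

/-- The family `K` is `E`-learnable. -/
def Learnable {ι : Type} {ar : ι → ℕ} {X : Type*} [TopologicalSpace X]
    (E : X → X → Prop) (K : Set (Md ι ar)) : Prop :=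
  ∃ Γ : LearnDom K → X, Continuous Γ ∧
    ∀ S S' : LearnDom K, (Iso S.1 S'.1 ↔ E (Γ S) (Γ S'))

/-- A countable family of pairwise nonisomorphic structures. -/
def GoodFamily {ι : Type} {ar : ι → ℕ} (K : Set (Md ι ar)) : Prop :=
  K.Countable ∧ ∀ A ∈ K, ∀ B ∈ K, A ≠ B → ¬ Iso A B

/-- `E` is learn-reducible to `F` (w.r.t. structures in `Md ι ar`). -/
def LearnRed (ι : Type) (ar : ι → ℕ) {X Y : Type*} [TopologicalSpace X]
    [TopologicalSpace Y] (E : X → X → Prop) (F : Y → Y → Prop) : Prop :=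
  ∀ K : Set (Md ι ar), GoodFamily K → Learnable E K → Learnable F K

/-- `E` is compact for learning (w.r.t. structures in `Md ι ar`). -/
def CompactForLearning (ι : Type) (ar : ι → ℕ) {X : Type*} [TopologicalSpace X]
    (E : X → X → Prop) : Prop :=
  ∀ K : Set (Md ι ar), GoodFamily K →
    (Learnable E K ↔ ∀ A ∈ K, ∀ B ∈ K, A ≠ B → Learnable E ({A, B} : Set (Md ι ar)))

/-!
The canonical pair at level `m + 2` is the image of the pair at level `m` under one fixed
operation: with `a = F_{m+1}` and `b = I_{m+1}`, the columns of `I_{m+3}` are the sequences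
`a ⋯ a b b ⋯`, and `F_{m+3}` has the limit `a a a ⋯` as one additional column. This matches one
double step of the Borel hierarchy, `C = ⋃ i, ⋂ j, D i j` with `D i j` two levels lower: when
`D i` is made decreasing, answering `D i k` at stage `k` yields `a a a ⋯` if `x ∈ ⋂ j, D i j` and
some `a ⋯ a b b ⋯` otherwise. Listing these answers for all `i` along with every `a ⋯ a b b ⋯`
adds the limit column exactly when `x ∈ C`. The base cases are open sets and, since every open
set is a countable union of clopen sets, the double step over clopen sets.
-/

open Set

section Relations

variable {Y : Type*} {R : Y → Y → Prop}

instance FSJump.instRefl [Std.Refl R] : Std.Refl (FSJump R) :=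
  ⟨fun p => ⟨fun k => ⟨k, refl (p k)⟩, fun k => ⟨k, refl (p k)⟩⟩⟩

instance FSJump.instSymm : Std.Symm (FSJump R) := ⟨fun _ _ h => ⟨h.2, h.1⟩⟩

instance RelPow.instRefl [Std.Refl R] : Std.Refl (RelPow R) := ⟨fun p k => refl (p k)⟩

instance RelPow.instSymm [Std.Symm R] : Std.Symm (RelPow R) := ⟨fun _ _ h k => symm (h k)⟩

theorem relPow_eq : RelPow (Eq : Y → Y → Prop) = Eq := by
  ext p q
  exact funext_iff.symm

instance FullRel.instRefl : (m : ℕ) → Std.Refl (FullRel m)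
  | 0 => inferInstanceAs (Std.Refl (FSJump (Eq : ℕ → ℕ → Prop)))
  | 1 => inferInstanceAs (Std.Refl (FSJump (Eq : (ℕ → ℕ) → (ℕ → ℕ) → Prop)))
  | m + 2 =>
    haveI := FullRel.instRefl m
    inferInstanceAs (Std.Refl (FSJump (RelPow (FullRel m))))

instance FullRel.instSymm : (m : ℕ) → Std.Symm (FullRel m)
  | 0 => inferInstanceAs (Std.Symm (FSJump (Eq : ℕ → ℕ → Prop)))
  | 1 => inferInstanceAs (Std.Symm (FSJump (Eq : (ℕ → ℕ) → (ℕ → ℕ) → Prop)))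
  | m + 2 => inferInstanceAs (Std.Symm (FSJump (RelPow (FullRel m))))

/-- The sequence with `p` at its even and `q` at its odd positions: it lists the values of both. -/
def interleave (p q : ℕ → Y) : ℕ → Y := Sum.elim p q ∘ Equiv.natSumNatEquivNat.symm

theorem forall_interleave {p q : ℕ → Y} {T : Y → Prop} :
    (∀ k, T (interleave p q k)) ↔ (∀ i, T (p i)) ∧ ∀ i, T (q i) :=
  (Equiv.natSumNatEquivNat.symm.forall_congr_right (q := fun s => T (Sum.elim p q s))).trans
    Sum.forall

theorem exists_interleave {p q : ℕ → Y} {T : Y → Prop} :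
    (∃ k, T (interleave p q k)) ↔ (∃ i, T (p i)) ∨ ∃ i, T (q i) :=
  (Equiv.natSumNatEquivNat.symm.exists_congr_right (q := fun s => T (Sum.elim p q s))).trans
    Sum.exists

theorem continuous_interleave {X : Type*} [TopologicalSpace X] [TopologicalSpace Y]
    {p q : X → ℕ → Y} (hp : Continuous p) (hq : Continuous q) :
    Continuous fun x => interleave (p x) (q x) := by
  refine continuous_pi fun k => ?_
  dsimp only [interleave, Function.comp_apply]
  cases Equiv.natSumNatEquivNat.symm k with
  | inl i => exact continuous_pi_iff.1 hp i
  | inr i => exact continuous_pi_iff.1 hq i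

theorem fsJump_interleave_iff {p q r : ℕ → Y} :
    FSJump R (interleave p q) r ↔
      ((∀ i, ∃ l, R (p i) (r l)) ∧ ∀ i, ∃ l, R (q i) (r l)) ∧
        ∀ l, (∃ i, R (r l) (p i)) ∨ ∃ i, R (r l) (q i) :=
  and_congr (forall_interleave (T := fun y => ∃ l, R y (r l)))
    (forall_congr' fun _ => exists_interleave)

theorem fsJump_interleave_self [Std.Refl R] {p q : ℕ → Y} (h : ∀ i, ∃ l, R (q i) (p l)) :
    FSJump R (interleave p q) p :=
  fsJump_interleave_iff.2 ⟨⟨fun i => ⟨i, refl (p i)⟩, h⟩, fun l => .inl ⟨l, refl (p l)⟩⟩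

theorem fsJump_interleave_of_succ_eq [Std.Refl R] [Std.Symm R] {p q r : ℕ → Y}
    (hr : ∀ k, r (k + 1) = p k) (h : ∀ i, ∃ l, R (q i) (r l)) (h₀ : ∃ i, R (q i) (r 0)) :
    FSJump R (interleave p q) r := by
  refine fsJump_interleave_iff.2 ⟨⟨fun i => ⟨i + 1, hr i ▸ refl _⟩, h⟩, fun l => ?_⟩
  cases l with
  | zero => exact .inr (h₀.imp fun _ hi => symm hi)
  | succ l => exact .inl ⟨l, hr l ▸ refl _⟩

/-- The sequence `a ⋯ a b b ⋯` with `i` entries `a`. In the paper's notation, `I_2` and `I_{n+2}`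
are `thresholdSeq 0 1` and `thresholdSeq F_n I_n`. -/
def thresholdSeq (a b : Y) (i k : ℕ) : Y := if k < i then a else b

end Relations

theorem canF_one_zero : (canF 1 : ℕ → ℕ → ℕ) 0 = fun _ => 0 := rfl

theorem canF_one_succ (i : ℕ) : (canF 1 : ℕ → ℕ → ℕ) (i + 1) = thresholdSeq 0 1 i := by
  funext k
  simp [canF, can, thresholdSeq]

theorem canF_add_two_zero (m : ℕ) : (canF (m + 2) : ℕ → ℕ → Tower m) 0 = fun _ => canF m := rfl

theorem canF_add_two_succ (m i : ℕ) :
    (canF (m + 2) : ℕ → ℕ → Tower m) (i + 1) = thresholdSeq (canF m) (canI m) i := by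
  funext k
  simp [canF, canI, can, thresholdSeq]

section SigmaLevel

variable {X : Type*} [TopologicalSpace X]

theorem iUnion_compl_mem_sigmaLevel {ι : Type*} [Countable ι] [Nonempty ι] {n : ℕ}
    {A : ι → Set X} (hA : ∀ i, A i ∈ SigmaLevel X n) : ⋃ i, (A i)ᶜ ∈ SigmaLevel X (n + 1) := by
  obtain ⟨e, he⟩ := exists_surjective_nat ι
  exact ⟨A ∘ e, fun k => hA (e k), (he.iUnion_comp fun i => (A i)ᶜ).symm⟩

theorem supClosed_sigmaLevel : (n : ℕ) → SupClosed (SigmaLevel X n)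
  | 0 => fun _ hC _ hD => IsOpen.union hC hD
  | n + 1 => by
    rintro _ ⟨A, hA, rfl⟩ _ ⟨B, hB, rfl⟩
    have h_union : (⋃ i, (A i)ᶜ) ⊔ ⋃ i, (B i)ᶜ = ⋃ s : ℕ ⊕ ℕ, (Sum.elim A B s)ᶜ := by
      ext x
      simp
    rw [h_union]
    exact iUnion_compl_mem_sigmaLevel (Sum.rec hA hB)

theorem infClosed_sigmaLevel : (n : ℕ) → InfClosed (SigmaLevel X n)
  | 0 => fun _ hC _ hD => IsOpen.inter hC hD
  | n + 1 => by
    rintro _ ⟨A, hA, rfl⟩ _ ⟨B, hB, rfl⟩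
    have h_inter : (⋃ i, (A i)ᶜ) ⊓ ⋃ i, (B i)ᶜ = ⋃ s : ℕ × ℕ, (A s.1 ∪ B s.2)ᶜ := by
      ext x
      simp
    rw [h_inter]
    exact iUnion_compl_mem_sigmaLevel fun s => supClosed_sigmaLevel n (hA s.1) (hB s.2)

theorem exists_eq_iUnion_iInter_of_mem_sigmaLevel {n : ℕ} {C : Set X}
    (hC : C ∈ SigmaLevel X (n + 2)) :
    ∃ D : ℕ → ℕ → Set X, (∀ i j, D i j ∈ SigmaLevel X n) ∧ C = ⋃ i, ⋂ j, D i j := by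
  obtain ⟨A, hA, rfl⟩ := hC
  choose D hD hAD using hA
  exact ⟨D, hD, by simp [hAD]⟩

theorem infClosed_isClopen : InfClosed {s : Set X | IsClopen s} := fun _ hs _ ht => hs.inter ht

theorem exists_eq_iUnion_iInter_isClopen_of_mem_sigmaLevel_one
    (hX : ∀ U : Set X, IsOpen U → ∃ V : ℕ → Set X, (∀ i, IsClopen (V i)) ∧ U = ⋃ i, V i)
    {C : Set X} (hC : C ∈ SigmaLevel X 1) :
    ∃ D : ℕ → ℕ → Set X, (∀ i j, IsClopen (D i j)) ∧ C = ⋃ i, ⋂ j, D i j := by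
  obtain ⟨A, hA, rfl⟩ := hC
  choose V hV hAV using fun i => hX (A i) (hA i)
  exact ⟨fun i j => (V i j)ᶜ, fun i j => (hV i j).compl, by simp [hAV]⟩

theorem exists_eq_iUnion_isClopen_of_isOpen {B : Set (Set X)} (hB : B.Countable)
    (hBc : ∀ U ∈ B, IsClopen U) (hBb : TopologicalSpace.IsTopologicalBasis B) {U : Set X}
    (hU : IsOpen U) : ∃ V : ℕ → Set X, (∀ i, IsClopen (V i)) ∧ U = ⋃ i, V i := by
  obtain ⟨S, hSB, rfl⟩ := hBb.open_eq_sUnion hU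
  obtain ⟨V, hV⟩ := ((hB.mono hSB).insert ∅).exists_eq_range (insert_nonempty ∅ S)
  refine ⟨V, fun i => ?_, ?_⟩
  · obtain h | h := hV.ge (mem_range_self i)
    exacts [h ▸ isClopen_empty, hBc _ (hSB h)]
  · rw [← sUnion_range, ← hV, sUnion_insert, empty_union]

theorem dissipate_mem_of_infClosed {α : Type*} {𝒮 : Set (Set α)} (h𝒮 : InfClosed 𝒮)
    {D : ℕ → Set α} (hD : ∀ k, D k ∈ 𝒮) (k : ℕ) : dissipate D k ∈ 𝒮 := by
  induction k with
  | zero => simpa using hD 0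
  | succ k ih => rw [dissipate_succ]; exact h𝒮 ih (hD (k + 1))

end SigmaLevel

/-- Wadge reducibility of `C` to a pair of properties of points of `Y`: some continuous map sends
`C` into the first and the complement of `C` into the second. -/
def WadgeReducible {X Y : Type*} [TopologicalSpace X] [TopologicalSpace Y] (C : Set X)
    (P Q : Y → Prop) : Prop :=
  ∃ f : X → Y, Continuous f ∧ (∀ x ∈ C, P (f x)) ∧ ∀ x ∉ C, Q (f x)

namespace WadgeReducible

variable {X Y : Type*} [TopologicalSpace X] [TopologicalSpace Y]

theorem of_isClopen {C : Set X} (hC : IsClopen C) {P Q : Y → Prop} {a b : Y} (ha : P a)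
    (hb : Q b) : WadgeReducible C P Q := by
  classical
  refine ⟨fun x => if x ∈ C then a else b,
    continuous_const.if (by simp [hC.frontier_eq]) continuous_const, fun x hx => ?_, fun x hx => ?_⟩
  · simpa only [if_pos hx] using ha
  · simpa only [if_neg hx] using hb

variable {R : Y → Y → Prop}

theorem iInter_of_antitone {a b : Y} {D : ℕ → Set X} (hD : Antitone D)
    (h : ∀ k, WadgeReducible (D k) (R · a) (R · b)) :
    WadgeReducible (⋂ k, D k) (RelPow R · fun _ => a)
      (fun p => ∃ l, RelPow R p (thresholdSeq a b l)) := by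
  classical
  choose f hf hfa hfb using h
  refine ⟨fun x k => f k x, continuous_pi hf, fun x hx k => hfa k x (mem_iInter.1 hx k),
    fun x hx => ?_⟩
  have h_exit : ∃ k, x ∉ D k := by simpa using hx
  refine ⟨Nat.find h_exit, fun k => ?_⟩
  rcases lt_or_ge k (Nat.find h_exit) with hk | hk
  · simpa only [thresholdSeq, if_pos hk] using hfa k x (not_not.1 (Nat.find_min h_exit hk))
  · simpa only [thresholdSeq, if_neg hk.not_gt] using
      hfb k x fun hx => Nat.find_spec h_exit (hD hk hx)

theorem iUnion_fsJump [Std.Refl R] [Std.Symm R] {F I : ℕ → Y} (hFI : ∀ k, F (k + 1) = I k)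
    {U : ℕ → Set X} (h : ∀ i, WadgeReducible (U i) (R · (F 0)) fun y => ∃ l, R y (I l)) :
    WadgeReducible (⋃ i, U i) (FSJump R · F) (FSJump R · I) := by
  choose f hf hfF hfI using h
  refine ⟨fun x => interleave I fun i => f i x, continuous_interleave continuous_const
    (continuous_pi hf), fun x hx => ?_, fun x hx => ?_⟩
  · obtain ⟨i₀, hi₀⟩ := mem_iUnion.1 hx
    refine fsJump_interleave_of_succ_eq hFI (fun i => ?_) ⟨i₀, hfF i₀ x hi₀⟩
    by_cases hi : x ∈ U i
    · exact ⟨0, hfF i x hi⟩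
    · obtain ⟨l, hl⟩ := hfI i x hi
      exact ⟨l + 1, hFI l ▸ hl⟩
  · exact fsJump_interleave_self fun i => hfI i x fun hi => hx (mem_iUnion_of_mem i hi)

theorem iUnion_iInter_fsJump [Std.Refl R] [Std.Symm R] {a b : Y} {F : ℕ → ℕ → Y}
    (hF_zero : F 0 = fun _ => a) (hF_succ : ∀ i, F (i + 1) = thresholdSeq a b i)
    {𝒮 : Set (Set X)} (h𝒮 : InfClosed 𝒮) (h : ∀ s ∈ 𝒮, WadgeReducible s (R · a) (R · b))
    {D : ℕ → ℕ → Set X} (hD : ∀ i j, D i j ∈ 𝒮) :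
    WadgeReducible (⋃ i, ⋂ j, D i j) (FSJump (RelPow R) · F)
      (FSJump (RelPow R) · (thresholdSeq a b)) := by
  refine iUnion_fsJump hF_succ fun i => ?_
  rw [hF_zero, ← iInter_dissipate]
  exact iInter_of_antitone antitone_dissipate
    fun k => h _ (dissipate_mem_of_infClosed h𝒮 (hD i) k)

end WadgeReducible

theorem stmt_9_general (n : ℕ) {X : Type*} [TopologicalSpace X]
    (hX : ∀ U : Set X, IsOpen U → ∃ V : ℕ → Set X, (∀ i, IsClopen (V i)) ∧ U = ⋃ i, V i)
    (C : Set X) (hC : C ∈ SigmaLevel X n) :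
    ∃ Γ : X → Tower n, Continuous Γ ∧
      (∀ x ∈ C, IsFull n (Γ x)) ∧ (∀ x ∉ C, IsInitial n (Γ x)) := by
  change WadgeReducible C (IsFull n) (IsInitial n)
  induction n using Nat.twoStepInduction generalizing C with
  | zero =>
    obtain ⟨V, hV, rfl⟩ := hX C hC
    exact .iUnion_fsJump (fun _ => rfl) fun i => .of_isClopen (hV i) rfl ⟨0, rfl⟩
  | one =>
    obtain ⟨D, hD, rfl⟩ := exists_eq_iUnion_iInter_isClopen_of_mem_sigmaLevel_one hX hC
    have h_red := WadgeReducible.iUnion_iInter_fsJump canF_one_zero canF_one_succ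
      infClosed_isClopen (fun _ hs => .of_isClopen hs rfl rfl) hD
    rwa [relPow_eq] at h_red
  | more m ih _ =>
    obtain ⟨D, hD, rfl⟩ := exists_eq_iUnion_iInter_of_mem_sigmaLevel hC
    exact .iUnion_iInter_fsJump (canF_add_two_zero m) (canF_add_two_succ m)
      (infClosed_sigmaLevel m) ih hD

/-- for `n ≥ 1` (here via the shift: `SigmaLevel X n = Σ⁰_{n+1}(X)`,
`Tower n = ℕ^(ℕ^(n+1))`, `IsFull n = full_{n+1}`, `IsInitial n = initial_{n+1}`):
if `X` has a countable basis of clopen sets and `C ∈ Σ⁰_{n+1}(X)`, then there is a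
continuous `Γ : X → ℕ^(ℕ^(n+1))` which is `full_{n+1}` on `C` and `initial_{n+1}`
off `C`. -/
theorem stmt_9 (n : ℕ) {X : Type*} [TopologicalSpace X]
    (hX : ∃ B : Set (Set X), B.Countable ∧ (∀ U ∈ B, IsClopen U) ∧
      TopologicalSpace.IsTopologicalBasis B)
    (C : Set X) (hC : C ∈ SigmaLevel X n) :
    ∃ Γ : X → Tower n, Continuous Γ ∧
      (∀ x ∈ C, IsFull n (Γ x)) ∧ (∀ x ∉ C, IsInitial n (Γ x)) := by
  obtain ⟨B, hB, hBc, hBb⟩ := hX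
  exact stmt_9_general n (fun _ => exists_eq_iUnion_isClopen_of_isOpen hB hBc hBb) C hC
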